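/- arXiv:1511.03322 — 2 statements merged into one kernel-verified Lean document; each statement's English description precedes it below -/
import Mathlib

section
/- Let H be a primitive, aperiodic and marked substitution over a finite alphabet A. Then there exists an integer l(H) > 0 such that every word z ∈ L_H with |z| > l(H) admits a unique decomposition z = S·H(x)·P, where x ∈ L_H is a finite word, S is a suffix of H(s) with |S| < |H(s)| for some letter s (S possibly empty), P is a prefix of H(p) with |P| < |H(p)| for some letter p (P possibly empty), and the word s·x·p belongs to L_H; uniqueness means the triple (S, x, P) is unique. -/
open Filter Topology MeasureTheory

variable {A : Type*}

/-- The shift map on infinite words. -/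
def shift (x : ℕ → A) : ℕ → A := fun n => x (n + 1)

/-- Image of a finite word under a substitution. -/
def wordMap (H : A → List A) (w : List A) : List A := w.flatMap H

/-- Image of an infinite word under a substitution (each `H a` nonempty makes this the
infinite concatenation `H(x₀)H(x₁)⋯`). -/
def substSeq (H : A → List A) (x : ℕ → A) : ℕ → A :=
  fun n => (wordMap H ((List.range (n + 1)).map x)).getD n (x 0)

/-- The prefix of length `n` of an infinite word. -/
def prefixWord (x : ℕ → A) (n : ℕ) : List A := (List.range n).map x

/-- The factor of length `n` at position `i` of an infinite word. -/
def factorAt (x : ℕ → A) (i n : ℕ) : List A := (List.range n).map fun j => x (i + j)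

/-- The language of an infinite word: the set of its finite factors. -/
def Lang (u : ℕ → A) : Set (List A) := {w | ∃ i, w = factorAt u i w.length}

/-- A sequence is (purely) periodic for the shift. -/
def PeriodicSeq (x : ℕ → A) : Prop := ∃ m, 0 < m ∧ ∀ n, x (n + m) = x n

/-- `u` is a fixed point of the substitution `H`. -/
def IsFixedPointSubst (H : A → List A) (u : ℕ → A) : Prop := substSeq H u = u

/-- `H` is primitive: some power of `H` maps every letter onto a word containing
every letter. -/
def PrimitiveSubst (H : A → List A) : Prop :=
  ∃ k, 0 < k ∧ ∀ a b : A, b ∈ (wordMap H)^[k] [a]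

/-- `H` is aperiodic: no fixed point of `H` is periodic for the shift. -/
def AperiodicSubst (H : A → List A) : Prop :=
  ∀ u : ℕ → A, IsFixedPointSubst H u → ¬ PeriodicSeq u

/-- `H` is marked: first letters of images are pairwise distinct, and so are last letters. -/
def MarkedSubst (H : A → List A) (hne : ∀ a, H a ≠ []) : Prop :=
  Function.Injective (fun a => (H a).head (hne a)) ∧
  Function.Injective (fun a => (H a).getLast (hne a))

/-- `H` is 2-full (with respect to the fixed point `u`): every word of length 2 belongs
to the language. -/
def TwoFull (H : A → List A) (u : ℕ → A) : Prop :=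
  ∀ w : List A, w.length = 2 → w ∈ Lang u

/-- The attractor `K`: closure of the shift-orbit of the fixed point `u`. -/
def orbitClosure [TopologicalSpace A] (u : ℕ → A) : Set (ℕ → A) :=
  closure {y | ∃ n, y = shift^[n] u}

/-- `δ(x)`: the length of the maximal prefix of `x` belonging to the language of `u`. -/
noncomputable def delta (u x : ℕ → A) : ℕ := sSup {n | prefixWord x n ∈ Lang u}

/-- The renormalization operator `R`. -/
noncomputable def renorm (H : A → List A) (V : (ℕ → A) → ℝ) : (ℕ → A) → ℝ :=
  fun x => ∑ i ∈ Finset.range (H (x 0)).length, V (shift^[i] (substSeq H x))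

/-- `t_n(x) = |H^n(x₀)|`. -/
def tlen (H : A → List A) (n : ℕ) (x : ℕ → A) : ℕ := ((wordMap H)^[n] [x 0]).length

/-- An accident occurs at time `b`. -/
def AccidentAt (u x : ℕ → A) (b : ℕ) : Prop :=
  0 < b ∧ delta u x - b < delta u (shift^[b] x) ∧
    ∀ i < b, delta u (shift^[i] x) = delta u x - i

/-- The first accident time of `x` (junk value `0` if there is none). -/
noncomputable def firstAccident (u x : ℕ → A) : ℕ := sInf {b | AccidentAt u x b}

/-- The `j`-th accident time `B_j` of `x`, defined inductively. -/
noncomputable def accidentTime (u x : ℕ → A) : ℕ → ℕ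
  | 0 => 0
  | j + 1 => accidentTime u x j + firstAccident u (shift^[accidentTime u x j] x)

/-- The set of (genuine) accident times of `x`. -/
def AccidentSet (u x : ℕ → A) : Set ℕ :=
  {B | ∃ j : ℕ, B = accidentTime u x (j + 1) ∧
        AccidentAt u (shift^[accidentTime u x j] x)
          (firstAccident u (shift^[accidentTime u x j] x))}

/-- A word is right special. -/
def RightSpecial (u : ℕ → A) (w : List A) : Prop :=
  ∃ b c : A, b ≠ c ∧ w ++ [b] ∈ Lang u ∧ w ++ [c] ∈ Lang u

/-- A word is left special. -/
def LeftSpecial (u : ℕ → A) (w : List A) : Prop :=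
  ∃ a b : A, a ≠ b ∧ a :: w ∈ Lang u ∧ b :: w ∈ Lang u

/-- A word is bispecial. -/
def Bispecial (u : ℕ → A) (w : List A) : Prop := RightSpecial u w ∧ LeftSpecial u w

/-- `l` is a recognizability constant for `H`: every long enough word of the language
admits a unique desubstitution. -/
def RecogBound (H : A → List A) (u : ℕ → A) (l : ℕ) : Prop :=
  ∀ z ∈ Lang u, l < z.length →
    ∃! d : List A × List A × List A,
      ∃ s p : A,
        z = d.1 ++ wordMap H d.2.1 ++ d.2.2 ∧
        d.2.1 ∈ Lang u ∧
        d.1 <:+ H s ∧ d.1.length < (H s).length ∧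
        d.2.2 <+: H p ∧ d.2.2.length < (H p).length ∧
        ([s] ++ d.2.1 ++ [p]) ∈ Lang u

/-- The incidence matrix of a substitution, with real entries. -/
def incMat [Fintype A] [DecidableEq A] (H : A → List A) : Matrix A A ℝ :=
  fun a b => ((H a).count b : ℝ)

/-- `lam` is the Perron–Frobenius eigenvalue of the incidence matrix of the (primitive)
substitution `H`: it admits an entrywise positive eigenvector. -/
def IsPerronValue [Fintype A] [DecidableEq A] (H : A → List A) (lam : ℝ) : Prop :=
  ∃ v : A → ℝ, (∀ a, 0 < v a) ∧ (incMat H).mulVec v = lam • v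

/-- Concatenation of a finite word with an infinite word. -/
def catWord (S : List A) (y : ℕ → A) : ℕ → A :=
  fun n => S.getD n (y (n - S.length))

section helpers

variable {A : Type*}

lemma factorAt_length (u : ℕ → A) (i n : ℕ) : (factorAt u i n).length = n := by
  simp [factorAt]

lemma factorAt_getElem? (u : ℕ → A) (i n t : ℕ) (h : t < n) :
    (factorAt u i n)[t]? = some (u (i + t)) := by
  simp [factorAt, h]

lemma factorAt_append (u : ℕ → A) (i m n : ℕ) :
    factorAt u i (m + n) = factorAt u i m ++ factorAt u (i + m) n := by
  unfold factorAt
  rw [List.range_add, List.map_append, List.map_map]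
  congr 1
  apply List.map_congr_left
  intro j _
  simp [Nat.add_assoc]

lemma factorAt_one (u : ℕ → A) (i : ℕ) : factorAt u i 1 = [u i] := by
  simp [factorAt]

lemma factorAt_mem (u : ℕ → A) (i n : ℕ) : factorAt u i n ∈ Lang u :=
  ⟨i, by rw [factorAt_length]⟩

lemma wordMap_append (H : A → List A) (v w : List A) :
    wordMap H (v ++ w) = wordMap H v ++ wordMap H w := by
  simp [wordMap]

lemma wordMap_cons (H : A → List A) (a : A) (w : List A) :
    wordMap H (a :: w) = H a ++ wordMap H w := by
  simp [wordMap]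

lemma wordMap_nil (H : A → List A) : wordMap H [] = [] := by
  simp [wordMap]

lemma length_le_wordMap (H : A → List A) (hne : ∀ a, H a ≠ []) (w : List A) :
    w.length ≤ (wordMap H w).length := by
  induction w with
  | nil => simp
  | cons a w ih =>
    rw [wordMap_cons, List.length_append, List.length_cons]
    have := List.length_pos_iff.2 (hne a)
    omega

/-- `G` fixes prefixes of `u`. -/
def FixP (G : A → List A) (u : ℕ → A) : Prop :=
  ∀ k, wordMap G (factorAt u 0 k) = factorAt u 0 (wordMap G (factorAt u 0 k)).length

lemma fixP_of_fixed (H : A → List A) (hne : ∀ a, H a ≠ []) (u : ℕ → A)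
    (hu : IsFixedPointSubst H u) : FixP H u := by
  intro k
  apply List.ext_getElem?
  intro t
  by_cases ht : t < (wordMap H (factorAt u 0 k)).length
  · rw [factorAt_getElem? _ _ _ _ ht]
    have h1 : u t = (wordMap H (factorAt u 0 (t + 1))).getD t (u 0) := by
      conv_lhs => rw [← hu]
      simp [substSeq, factorAt]
    have hl : t < (wordMap H (factorAt u 0 (t + 1))).length := by
      have := length_le_wordMap H hne (factorAt u 0 (t + 1))
      rw [factorAt_length] at this
      omega
    have h2 : (wordMap H (factorAt u 0 (t + 1)))[t]? = some (u t) := by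
      rw [h1, List.getD_eq_getElem _ _ hl, List.getElem?_eq_getElem hl]
    rw [Nat.zero_add, ← h2]
    rcases le_total k (t + 1) with h | h
    · obtain ⟨d, hd⟩ := Nat.exists_eq_add_of_le h
      rw [hd, factorAt_append, wordMap_append, List.getElem?_append_left ht]
    · obtain ⟨d, hd⟩ := Nat.exists_eq_add_of_le h
      rw [hd, factorAt_append, wordMap_append, List.getElem?_append_left hl]
  · rw [List.getElem?_eq_none (by omega), List.getElem?_eq_none (by rw [factorAt_length]; omega)]

/-- Cut points. -/
def cutPt (G : A → List A) (u : ℕ → A) (k : ℕ) : ℕ := (wordMap G (factorAt u 0 k)).length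

lemma cutPt_zero (G : A → List A) (u : ℕ → A) : cutPt G u 0 = 0 := by
  simp [cutPt, factorAt, wordMap]

lemma cutPt_succ (G : A → List A) (u : ℕ → A) (k : ℕ) :
    cutPt G u (k + 1) = cutPt G u k + (G (u k)).length := by
  unfold cutPt
  rw [factorAt_append, wordMap_append, List.length_append, factorAt_one, wordMap_cons, wordMap_nil]
  simp

lemma le_cutPt (G : A → List A) (hne : ∀ a, G a ≠ []) (u : ℕ → A) (k : ℕ) :
    k ≤ cutPt G u k := by
  have := length_le_wordMap G hne (factorAt u 0 k)
  rwa [factorAt_length] at this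

lemma cutPt_mono (G : A → List A) (u : ℕ → A) : Monotone (cutPt G u) :=
  monotone_nat_of_le_succ (fun k => by rw [cutPt_succ]; omega)

lemma wordMap_factorAt (G : A → List A) (u : ℕ → A) (hf : FixP G u) (k d : ℕ) :
    wordMap G (factorAt u k d) = factorAt u (cutPt G u k) (cutPt G u (k + d) - cutPt G u k) := by
  have h1 := hf (k + d)
  have hm := cutPt_mono G u (Nat.le_add_right k d)
  change _ = factorAt u 0 (cutPt G u (k + d)) at h1
  obtain ⟨e, he⟩ := Nat.exists_eq_add_of_le hm
  rw [factorAt_append, wordMap_append, he, factorAt_append, Nat.zero_add, Nat.zero_add, hf k] at h1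
  have h2 := List.append_inj_right h1 (by rw [factorAt_length, factorAt_length]; rfl)
  rw [h2, he, Nat.add_sub_cancel_left]

lemma G_factorAt (G : A → List A) (u : ℕ → A) (hf : FixP G u) (k : ℕ) :
    G (u k) = factorAt u (cutPt G u k) (G (u k)).length := by
  have := wordMap_factorAt G u hf k 1
  rw [factorAt_one, wordMap_cons, wordMap_nil, List.append_nil, cutPt_succ,
    Nat.add_sub_cancel_left] at this
  exact this

/-- First cut point at or after `q`. -/
lemma exists_cut (G : A → List A) (hne : ∀ a, G a ≠ []) (u : ℕ → A) (q : ℕ) (hq : 0 < q) :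
    ∃ k, cutPt G u k < q ∧ q ≤ cutPt G u (k + 1) := by
  classical
  have hex : ∃ k, q ≤ cutPt G u k := ⟨q, le_cutPt G hne u q⟩
  have h1 := Nat.find_spec hex
  have h0 : Nat.find hex ≠ 0 := by
    intro h
    rw [h, cutPt_zero] at h1
    omega
  obtain ⟨k, hk⟩ := Nat.exists_eq_succ_of_ne_zero h0
  refine ⟨k, ?_, ?_⟩
  · have := Nat.find_min hex (m := k) (by omega)
    omega
  · rw [hk] at h1
    exact h1

/-- Powers of a substitution. -/
def powS (H : A → List A) (n : ℕ) (a : A) : List A := (wordMap H)^[n] [a]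

lemma iter_append (H : A → List A) (n : ℕ) (v w : List A) :
    (wordMap H)^[n] (v ++ w) = (wordMap H)^[n] v ++ (wordMap H)^[n] w := by
  induction n generalizing v w with
  | zero => rfl
  | succ n ih => rw [Function.iterate_succ_apply, wordMap_append, ih]; rfl

lemma iter_nil (H : A → List A) (n : ℕ) : (wordMap H)^[n] [] = [] := by
  induction n with
  | zero => rfl
  | succ n ih => rw [Function.iterate_succ_apply, wordMap_nil, ih]

lemma wordMap_powS (H : A → List A) (n : ℕ) (w : List A) :
    wordMap (powS H n) w = (wordMap H)^[n] w := by
  induction w with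
  | nil => rw [iter_nil, wordMap_nil]
  | cons a w ih =>
    rw [wordMap_cons, ih, ← List.singleton_append, iter_append]; rfl

lemma length_le_iter (H : A → List A) (hne : ∀ a, H a ≠ []) (n : ℕ) (w : List A) :
    w.length ≤ ((wordMap H)^[n] w).length := by
  induction n with
  | zero => rfl
  | succ n ih =>
    rw [Function.iterate_succ_apply']
    exact ih.trans (length_le_wordMap H hne _)

lemma powS_ne (H : A → List A) (hne : ∀ a, H a ≠ []) (n : ℕ) (a : A) : powS H n a ≠ [] := by
  have := length_le_iter H hne n [a]
  intro h
  unfold powS at h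
  rw [h] at this
  simp at this

lemma fixP_powS (H : A → List A) (u : ℕ → A) (hf : FixP H u) (n : ℕ) :
    FixP (powS H n) u := by
  intro k
  rw [wordMap_powS]
  induction n with
  | zero => simp [factorAt_length]
  | succ n ih =>
    rw [Function.iterate_succ_apply']
    rw [ih]
    exact hf _

lemma two_mul_length (H : A → List A) (w : List A) (h2 : ∀ a, 2 ≤ (H a).length) :
    2 * w.length ≤ (wordMap H w).length := by
  induction w with
  | nil => simp
  | cons a w ih =>
    rw [wordMap_cons, List.length_append, List.length_cons]
    have := h2 a
    omega

lemma growth [Nontrivial A] (H : A → List A) (hprim : PrimitiveSubst H) (N : ℕ) (a : A) :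
    ∃ n, N ≤ ((wordMap H)^[n] [a]).length := by
  obtain ⟨k, _, hk⟩ := hprim
  have h2 : ∀ b, 2 ≤ (powS H k b).length := by
    intro b
    obtain ⟨x, y, hxy⟩ := exists_pair_ne A
    have hx := hk b x
    have hy := hk b y
    change x ∈ powS H k b at hx
    change y ∈ powS H k b at hy
    by_contra hc
    match hl : powS H k b, hx, hy, hc with
    | [], hx, _, _ => simp at hx
    | [c], hx, hy, _ =>
      simp at hx hy
      exact hxy (hx.trans hy.symm)
    | c :: d :: l, _, _, hc => simp at hc
  have key : ∀ m, m + 1 ≤ ((wordMap H)^[k * m] [a]).length := by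
    intro m
    induction m with
    | zero => simp
    | succ m ih =>
      rw [Nat.mul_succ, Nat.add_comm (k * m) k, Function.iterate_add_apply, ← wordMap_powS]
      have := two_mul_length (powS H k) ((wordMap H)^[k * m] [a]) h2
      omega
  exact ⟨k * N, by have := key N; omega⟩

lemma exists_len_bound [Fintype A] (G : A → List A) : ∃ M, 0 < M ∧ ∀ a, (G a).length ≤ M := by
  refine ⟨(Finset.univ.sup fun a => (G a).length) + 1, by omega, fun a => ?_⟩
  have := Finset.le_sup (f := fun a => (G a).length) (Finset.mem_univ a)
  omega

lemma recurrence [Fintype A] [Nontrivial A] (H : A → List A) (hne : ∀ a, H a ≠ [])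
    (hprim : PrimitiveSubst H) (u : ℕ → A) (hf : FixP H u) (N : ℕ) :
    ∃ R, ∀ i, ∃ j, i ≤ j ∧ j + N ≤ i + R ∧ ∀ t < N, u (j + t) = u t := by
  obtain ⟨n, hn⟩ := growth H hprim N (u 0)
  obtain ⟨k, _, hk⟩ := hprim
  obtain ⟨M, hM, hMb⟩ := exists_len_bound (powS H (n + k))
  refine ⟨2 * M + 1, fun i => ?_⟩
  obtain ⟨c, hc1, hc2⟩ := exists_cut (powS H (n + k)) (powS_ne H hne _) u (i + 1) (by omega)
  have hc3 := cutPt_succ (powS H (n + k)) u c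
  have hb := hMb (u c)
  have hb' := hMb (u (c + 1))
  have hG := G_factorAt _ u (fixP_powS H u hf (n + k)) (c + 1)
  obtain ⟨l1, l2, hl⟩ := List.append_of_mem (hk (u (c + 1)) (u 0))
  have hsplit : powS H (n + k) (u (c + 1)) =
      (wordMap H)^[n] l1 ++ ((wordMap H)^[n] [u 0] ++ (wordMap H)^[n] l2) := by
    unfold powS
    rw [Function.iterate_add_apply, hl, ← List.singleton_append, iter_append, iter_append]
  have hlen := congrArg List.length hsplit
  simp only [List.length_append] at hlen
  refine ⟨cutPt (powS H (n + k)) u (c + 1) + ((wordMap H)^[n] l1).length, by omega, by omega, ?_⟩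
  intro t ht
  have e1 : (powS H (n + k) (u (c + 1)))[((wordMap H)^[n] l1).length + t]? = some (u t) := by
    rw [hsplit, List.getElem?_append_right (by omega), Nat.add_sub_cancel_left,
      List.getElem?_append_left (by omega)]
    have := G_factorAt _ u (fixP_powS H u hf n) 0
    rw [cutPt_zero] at this
    change (powS H n (u 0))[t]? = _
    rw [this, factorAt_getElem? _ _ _ _ (by unfold powS; omega), Nat.zero_add]
  rw [hG, factorAt_getElem? _ _ _ _ (by omega)] at e1
  rw [Nat.add_assoc]
  exact Option.some.inj e1

/-- Existence of the decomposition. -/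
lemma exists_decomp (H : A → List A) (hne : ∀ a, H a ≠ []) (u : ℕ → A) (hf : FixP H u)
    (M : ℕ) (hM : ∀ a, (H a).length ≤ M) (q n : ℕ) (hq : 0 < q) (hn : M ≤ n) :
    ∃ S x P : List A, ∃ s p : A, factorAt u q n = S ++ wordMap H x ++ P ∧ x ∈ Lang u ∧
      S <:+ H s ∧ S.length < (H s).length ∧ P <+: H p ∧ P.length < (H p).length ∧
      ([s] ++ x ++ [p]) ∈ Lang u := by
  obtain ⟨a, ha1, ha2⟩ := exists_cut H hne u q hq
  obtain ⟨b, hb1, hb2⟩ := exists_cut H hne u (q + n + 1) (by omega)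
  have hsa := cutPt_succ H u a
  have hsb := cutPt_succ H u b
  have hMa := hM (u a)
  have hab : a + 1 ≤ b := by
    by_contra hcon
    have := cutPt_mono H u (show b + 1 ≤ a + 1 by omega)
    omega
  obtain ⟨d, rfl⟩ := Nat.exists_eq_add_of_le hab
  have hmono := cutPt_mono H u hab
  refine ⟨factorAt u q (cutPt H u (a + 1) - q), factorAt u (a + 1) d,
    factorAt u (cutPt H u (a + 1 + d)) (q + n - cutPt H u (a + 1 + d)), u a, u (a + 1 + d),
    ?_, factorAt_mem _ _ _, ?_, ?_, ?_, ?_, ?_⟩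
  · rw [wordMap_factorAt H u hf]
    generalize cutPt H u (a + 1) = c1 at *
    generalize cutPt H u (a + 1 + d) = c2 at *
    obtain ⟨e1, rfl⟩ := Nat.exists_eq_add_of_le ha2
    obtain ⟨e2, rfl⟩ := Nat.exists_eq_add_of_le hmono
    obtain ⟨e3, rfl⟩ := Nat.exists_eq_add_of_le (show e1 + e2 ≤ n by omega)
    rw [factorAt_append, factorAt_append, Nat.add_sub_cancel_left, Nat.add_sub_cancel_left,
      show q + (e1 + e2 + e3) - (q + e1 + e2) = e3 by omega,
      show q + (e1 + e2) = q + e1 + e2 by omega]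
  · rw [G_factorAt H u hf a]
    obtain ⟨e1, he1⟩ := Nat.exists_eq_add_of_le ha1.le
    rw [show (H (u a)).length = e1 + (cutPt H u (a + 1) - q) by omega, factorAt_append, ← he1]
    exact List.suffix_append _ _
  · rw [factorAt_length]; omega
  · rw [G_factorAt H u hf (a + 1 + d)]
    obtain ⟨e1, he1⟩ := Nat.exists_eq_add_of_le
      (show q + n - cutPt H u (a + 1 + d) ≤ (H (u (a + 1 + d))).length by omega)
    rw [he1, factorAt_append]
    exact List.prefix_append _ _
  · rw [factorAt_length]; omega
  · rw [← factorAt_one u a, ← factorAt_one u (a + 1 + d), ← factorAt_append,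
      show a + 1 + d = a + (1 + d) by omega, ← factorAt_append]
    exact factorAt_mem _ _ _

lemma head?_inj (H : A → List A) (hne : ∀ a, H a ≠ []) (hmarked : MarkedSubst H hne) :
    Function.Injective (fun a => (H a).head?) := by
  intro a b h
  apply hmarked.1
  simp only at h ⊢
  rw [List.head?_eq_some_head (hne a), List.head?_eq_some_head (hne b)] at h
  exact Option.some.inj h

lemma getLast?_inj (H : A → List A) (hne : ∀ a, H a ≠ []) (hmarked : MarkedSubst H hne) :
    Function.Injective (fun a => (H a).getLast?) := by
  intro a b h
  apply hmarked.2
  simp only at h ⊢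
  rw [List.getLast?_eq_some_getLast (hne a), List.getLast?_eq_some_getLast (hne b)] at h
  exact Option.some.inj h

lemma aux_right (H : A → List A) (hne : ∀ a, H a ≠ [])
    (hinj : Function.Injective (fun a => (H a).head?)) (x P P' : List A) (a p' : A)
    (h : H a ++ wordMap H x ++ P = P') (h1 : P' <+: H p') (h2 : P'.length < (H p').length) :
    False := by
  have hP : P' ≠ [] := by
    rintro rfl
    simp [hne] at h
  have : a = p' := by
    apply hinj
    simp only
    obtain ⟨t, ht⟩ := h1
    rw [← ht, List.head?_append_of_ne_nil _ hP, ← h, List.append_assoc,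
      List.head?_append_of_ne_nil _ (hne a)]
  subst this
  rw [← h] at h2
  simp at h2

lemma right_det (H : A → List A) (hne : ∀ a, H a ≠ [])
    (hinj : Function.Injective (fun a => (H a).head?)) (x x' P P' : List A) (p p' : A)
    (h : wordMap H x ++ P = wordMap H x' ++ P')
    (h1 : P <+: H p) (h2 : P.length < (H p).length)
    (h1' : P' <+: H p') (h2' : P'.length < (H p').length) : x = x' ∧ P = P' := by
  induction x generalizing x' with
  | nil =>
    cases x' with
    | nil => simpa [wordMap_nil] using h
    | cons b x' =>
      rw [wordMap_nil, wordMap_cons, List.nil_append] at h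
      exact (aux_right H hne hinj x' P' P b p h.symm h1 h2).elim
  | cons a x ih =>
    cases x' with
    | nil =>
      rw [wordMap_nil, wordMap_cons, List.nil_append] at h
      exact (aux_right H hne hinj x P P' a p' h h1' h2').elim
    | cons b x' =>
      rw [wordMap_cons, wordMap_cons] at h
      have hab : a = b := by
        apply hinj
        simp only
        have := congrArg List.head? h
        rwa [List.append_assoc, List.append_assoc, List.head?_append_of_ne_nil _ (hne a),
          List.head?_append_of_ne_nil _ (hne b)] at this
      subst hab
      rw [List.append_assoc, List.append_assoc] at h
      obtain ⟨e1, e2⟩ := ih x' (List.append_cancel_left h)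
      exact ⟨by rw [e1], e2⟩

lemma aux_left (H : A → List A) (hne : ∀ a, H a ≠ [])
    (hinj : Function.Injective (fun a => (H a).getLast?)) (x S S' : List A) (a s' : A)
    (h : S ++ (wordMap H x ++ H a) = S') (h1 : S' <:+ H s') (h2 : S'.length < (H s').length) :
    False := by
  have hS : S' ≠ [] := by
    rintro rfl
    simp [hne] at h
  have : a = s' := by
    apply hinj
    simp only
    obtain ⟨t, ht⟩ := h1
    rw [← ht, List.getLast?_append_of_ne_nil _ hS, ← h, ← List.append_assoc,
      List.getLast?_append_of_ne_nil _ (hne a)]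
  subst this
  rw [← h] at h2
  simp at h2
  omega

lemma left_det (H : A → List A) (hne : ∀ a, H a ≠ [])
    (hinj : Function.Injective (fun a => (H a).getLast?)) (x x' S S' : List A) (s s' : A)
    (h : S ++ wordMap H x = S' ++ wordMap H x')
    (h1 : S <:+ H s) (h2 : S.length < (H s).length)
    (h1' : S' <:+ H s') (h2' : S'.length < (H s').length) : S = S' := by
  have hs : ∀ (y : List A) (b : A), wordMap H (y ++ [b]) = wordMap H y ++ H b := by
    intro y b
    rw [wordMap_append, wordMap_cons, wordMap_nil, List.append_nil]
  induction x using List.reverseRecOn generalizing x' with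
  | nil =>
    rcases List.eq_nil_or_concat' x' with rfl | ⟨y, b, rfl⟩
    · simpa [wordMap_nil] using h
    · rw [hs, wordMap_nil, List.append_nil] at h
      exact (aux_left H hne hinj y S' S b s h.symm h1 h2).elim
  | append_singleton x a ih =>
    rcases List.eq_nil_or_concat' x' with rfl | ⟨y, b, rfl⟩
    · rw [hs, wordMap_nil, List.append_nil] at h
      exact (aux_left H hne hinj x S S' a s' h h1' h2').elim
    · rw [hs, hs, ← List.append_assoc, ← List.append_assoc] at h
      have hab : a = b := by
        apply hinj
        simp only
        have := congrArg List.getLast? h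
        rwa [List.getLast?_append_of_ne_nil _ (hne a),
          List.getLast?_append_of_ne_nil _ (hne b)] at this
      subst hab
      exact ih y (List.append_cancel_right h)

/-- Two cuttings of `Z` without common cut point, the second one starting with overhang `w`. -/
def Config (H : A → List A) (M : ℕ) (Z w : List A) : Prop :=
  ∃ x P x' P' : List A, Z = wordMap H x ++ P ∧ Z = w ++ wordMap H x' ++ P' ∧ w ≠ [] ∧
    w.length ≤ M ∧ P.length ≤ M ∧ P'.length ≤ M ∧
    ∀ x1 x1' : List A, x1 <+: x → x1' <+: x' →
      (wordMap H x1).length ≠ w.length + (wordMap H x1').length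

lemma config_step [Nonempty A] (H : A → List A) (hne : ∀ a, H a ≠ [])
    (hinj : Function.Injective (fun a => (H a).head?)) (M : ℕ) (hM : ∀ a, (H a).length ≤ M) :
    ∃ e F : List A → List A, ∀ Z w, Config H M Z w → M < Z.length →
      0 < (e w).length ∧ (e w).length ≤ M ∧ ∃ Z', Z = e w ++ Z' ∧ Config H M Z' (F w) := by
  let nx : List A → A := fun w => Function.invFun (fun a => (H a).head?) w.head?
  refine ⟨fun w => w.take (H (nx w)).length,
    fun w => if (H (nx w)).length < w.length then w.drop (H (nx w)).length
      else (H (nx w)).drop w.length, ?_⟩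
  rintro Z w ⟨x, P, x', P', hZ, hZ', hw, hwM, hP, hP', hno⟩ hlen
  cases x with
  | nil =>
    rw [wordMap_nil, List.nil_append] at hZ
    subst hZ
    omega
  | cons b x =>
    rw [wordMap_cons, List.append_assoc] at hZ
    have hnx : nx w = b := by
      have : w.head? = (H b).head? := by
        have h1 : Z.head? = w.head? := by
          rw [hZ', List.append_assoc, List.head?_append_of_ne_nil _ hw]
        have h2 : Z.head? = (H b).head? := by
          rw [hZ, List.head?_append_of_ne_nil _ (hne b)]
        rw [← h1, h2]
      change Function.invFun (fun a => (H a).head?) w.head? = b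
      rw [this]
      exact Function.leftInverse_invFun hinj b
    simp only [hnx]
    have hb := List.length_pos_iff.2 (hne b)
    have hwp := List.length_pos_iff.2 hw
    have hMb := hM b
    have hneq := hno [b] [] (by simp) (List.nil_prefix)
    simp only [wordMap_cons, wordMap_nil, List.append_nil, List.length_nil, Nat.add_zero] at hneq
    have heq : H b ++ (wordMap H x ++ P) = w ++ (wordMap H x' ++ P') := by
      rw [← hZ, hZ', List.append_assoc]
    refine ⟨by simp; omega, by simp; omega, ?_⟩
    split_ifs with hlt
    · -- the image of `b` is shorter than the overhang
      have hpre : H b <+: w := by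
        apply List.prefix_of_prefix_length_le (l₃ := H b ++ (wordMap H x ++ P))
        · exact List.prefix_append _ _
        · rw [heq]; exact List.prefix_append _ _
        · omega
      obtain ⟨v, rfl⟩ := hpre
      have hv : 0 < v.length := by simpa using hlt
      refine ⟨wordMap H x ++ P, by simpa using hZ, x, P, x', P', rfl, ?_, ?_, ?_, hP, hP', ?_⟩
      · rw [List.append_assoc] at heq
        simpa using List.append_cancel_left heq
      · simpa using List.length_pos_iff.1 hv
      · simp at hwM ⊢; omega
      · intro x1 x1' h1 h1'
        have := hno (b :: x1) x1' (by simpa using h1) h1'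
        rw [wordMap_cons] at this
        simp at this ⊢
        omega
    · have hpre : w <+: H b := by
        apply List.prefix_of_prefix_length_le (l₃ := H b ++ (wordMap H x ++ P))
        · rw [heq]; exact List.prefix_append _ _
        · exact List.prefix_append _ _
        · omega
      obtain ⟨v, hv⟩ := hpre
      rw [← hv] at hneq hlt heq hMb hZ ⊢
      have hvp : 0 < v.length := by
        simp at hneq
        exact List.length_pos_iff.2 hneq
      refine ⟨wordMap H x' ++ P', ?_, x', P', x, P, rfl, ?_, ?_, ?_, hP', hP, ?_⟩
      · rw [hZ']; simp
      · rw [List.append_assoc] at heq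
        simpa using (List.append_cancel_left heq).symm
      · simpa using List.length_pos_iff.1 hvp
      · simp at hMb ⊢; omega
      · intro x1 x1' h1 h1'
        have := hno (b :: x1') x1 (by simpa using h1') h1
        rw [wordMap_cons, ← hv] at this
        simp at this ⊢
        omega

lemma config_agree (H : A → List A) (M : ℕ) (e F : List A → List A)
    (hstep : ∀ Z w, Config H M Z w → M < Z.length →
      0 < (e w).length ∧ (e w).length ≤ M ∧ ∃ Z', Z = e w ++ Z' ∧ Config H M Z' (F w))
    (n : ℕ) : ∀ Z Y w, Config H M Z w → Config H M Y w → n + M < Z.length → n + M < Y.length →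
      Z[n]? = Y[n]? := by
  induction n using Nat.strong_induction_on with
  | _ n ih =>
    intro Z Y w hZ hY hnZ hnY
    obtain ⟨h1, h2, Z', rfl, hZ'⟩ := hstep Z w hZ (by omega)
    obtain ⟨_, _, Y', rfl, hY'⟩ := hstep Y w hY (by omega)
    by_cases hn : n < (e w).length
    · rw [List.getElem?_append_left hn, List.getElem?_append_left hn]
    · rw [List.getElem?_append_right (by omega), List.getElem?_append_right (by omega)]
      simp only [List.length_append] at hnZ hnY
      exact ih (n - (e w).length) (by omega) Z' Y' (F w) hZ' hY' (by omega) (by omega)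

lemma config_iter (H : A → List A) (M : ℕ) (e F : List A → List A)
    (hstep : ∀ Z w, Config H M Z w → M < Z.length →
      0 < (e w).length ∧ (e w).length ≤ M ∧ ∃ Z', Z = e w ++ Z' ∧ Config H M Z' (F w))
    (w : List A) (i : ℕ) (Z : List A) (hZ : Config H M Z w) (hl : i * M + M < Z.length) :
    (∑ t ∈ Finset.range i, (e (F^[t] w)).length) ≤ i * M ∧
    (∀ t < i, 0 < (e (F^[t] w)).length) ∧
    Config H M (Z.drop (∑ t ∈ Finset.range i, (e (F^[t] w)).length)) (F^[i] w) := by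
  induction i with
  | zero => simpa using hZ
  | succ i ih =>
    rw [Nat.succ_mul] at hl
    obtain ⟨h1, h2, h3⟩ := ih (by omega)
    obtain ⟨g1, g2, Z', g3, g4⟩ := hstep _ _ h3 (by rw [List.length_drop]; omega)
    refine ⟨?_, ?_, ?_⟩
    · rw [Finset.sum_range_succ, Nat.succ_mul]; omega
    · intro t ht
      rcases Nat.lt_succ_iff_lt_or_eq.1 ht with h | rfl
      · exact h2 t h
      · exact g1
    · rw [Finset.sum_range_succ, ← List.drop_drop, g3, List.drop_left,
        Function.iterate_succ_apply']
      exact g4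

/-- Long configurations are eventually periodic, with bounded period and preperiod. -/
lemma config_periodic [Fintype A] [Nonempty A] (H : A → List A) (hne : ∀ a, H a ≠ [])
    (hinj : Function.Injective (fun a => (H a).head?)) (M : ℕ) (hM : ∀ a, (H a).length ≤ M) :
    ∃ K, ∀ Z w, Config H M Z w → K + M < Z.length →
      ∃ c p, c ≤ K ∧ 0 < p ∧ p ≤ K ∧ ∀ n, c + n + p + M < Z.length →
        Z[c + n + p]? = Z[c + n]? := by
  obtain ⟨e, F, hstep⟩ := config_step H hne hinj M hM
  have hfin : {l : List A | l.length ≤ M}.Finite := List.finite_length_le A M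
  refine ⟨hfin.toFinset.card * M, ?_⟩
  intro Z w hZ hl
  have hit : ∀ i, i ≤ hfin.toFinset.card → _ := fun i hi =>
    config_iter H M e F hstep w i Z hZ (by
      have := Nat.mul_le_mul_right M hi
      omega)
  have hmem : ∀ i ∈ Finset.range (hfin.toFinset.card + 1), F^[i] w ∈ hfin.toFinset := by
    intro i hi
    rw [Finset.mem_range] at hi
    obtain ⟨_, _, _, _, _, _, _, _, _, h, _⟩ := hit i (by omega)
    simpa using h
  obtain ⟨i', hi', j', hj', hne', heq'⟩ :=
    Finset.exists_ne_map_eq_of_card_lt_of_maps_to (by simp) hmem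
  have main : ∃ i j, i < j ∧ j ≤ hfin.toFinset.card ∧ F^[i] w = F^[j] w := by
    rw [Finset.mem_range] at hi' hj'
    rcases lt_or_gt_of_ne hne' with h | h
    · exact ⟨i', j', h, by omega, heq'⟩
    · exact ⟨j', i', h, by omega, heq'.symm⟩
  obtain ⟨i, j, hij, hj, heq⟩ := main
  obtain ⟨a1, a2, a3⟩ := hit i (by omega)
  obtain ⟨b1, b2, b3⟩ := hit j hj
  have hiK := Nat.mul_le_mul_right M (show i ≤ hfin.toFinset.card by omega)
  have hjK := Nat.mul_le_mul_right M hj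
  have hlt : (∑ t ∈ Finset.range i, (e (F^[t] w)).length) <
      ∑ t ∈ Finset.range j, (e (F^[t] w)).length := by
    have h1 : (∑ t ∈ Finset.range i, (e (F^[t] w)).length) <
        ∑ t ∈ Finset.range (i + 1), (e (F^[t] w)).length := by
      rw [Finset.sum_range_succ]
      have := b2 i hij
      omega
    refine h1.trans_le (Finset.sum_le_sum_of_subset ?_)
    intro t
    simp only [Finset.mem_range]
    omega
  rw [← heq] at b3
  generalize (∑ t ∈ Finset.range i, (e (F^[t] w)).length) = c at *
  generalize (∑ t ∈ Finset.range j, (e (F^[t] w)).length) = d at *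
  refine ⟨c, d - c, by omega, by omega, by omega, ?_⟩
  intro n hn
  have := config_agree H M e F hstep n _ _ _ b3 a3 (by rw [List.length_drop]; omega)
    (by rw [List.length_drop]; omega)
  rw [List.getElem?_drop, List.getElem?_drop] at this
  rw [← this]
  congr 1
  omega

/-- Two decompositions with different left ends give a configuration. -/
lemma config_of_decomp (H : A → List A) (hne : ∀ a, H a ≠ [])
    (hinj : Function.Injective (fun a => (H a).getLast?)) (M : ℕ) (hM : ∀ a, (H a).length ≤ M)
    (z S x P S' x' P' : List A) (s p s' p' : A)
    (h : z = S ++ wordMap H x ++ P) (h' : z = S' ++ wordMap H x' ++ P')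
    (h1 : S <:+ H s) (h2 : S.length < (H s).length)
    (h1' : S' <:+ H s') (h2' : S'.length < (H s').length)
    (h3 : P.length < (H p).length) (h3' : P'.length < (H p').length)
    (hlt : S.length < S'.length) :
    ∃ w, Config H M (z.drop S.length) w := by
  have hpre : S <+: S' := by
    apply List.prefix_of_prefix_length_le (l₃ := z)
    · rw [h, List.append_assoc]; exact List.prefix_append _ _
    · rw [h', List.append_assoc]; exact List.prefix_append _ _
    · omega
  obtain ⟨w, rfl⟩ := hpre
  have e1 := hM s'
  have e2 := hM p
  have e3 := hM p'
  refine ⟨w, x, P, x', P', ?_, ?_, ?_, ?_, by omega, by omega, ?_⟩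
  · rw [h]; simp
  · rw [h']; simp
  · rintro rfl
    simp at hlt
  · simp at h2'; omega
  · rintro x1 x1' ⟨t, rfl⟩ ⟨t', rfl⟩ hc
    have hEq : S ++ wordMap H x1 = (S ++ w) ++ wordMap H x1' := by
      rw [h, wordMap_append, wordMap_append] at h'
      have h'' : (S ++ wordMap H x1) ++ (wordMap H t ++ P) =
          ((S ++ w) ++ wordMap H x1') ++ (wordMap H t' ++ P') := by
        simpa using h'
      refine List.append_inj_left h'' ?_
      simp
      omega
    have := left_det H hne hinj x1 x1' S (S ++ w) s s' hEq h1 h2 h1' h2'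
    rw [← this] at hlt
    omega

end helpers

theorem exists_recognizability_bound
    {A : Type*} [Fintype A] [DecidableEq A] [TopologicalSpace A] [DiscreteTopology A]
    (H : A → List A) (hne : ∀ a, H a ≠ [])
    (hprim : PrimitiveSubst H) (haper : AperiodicSubst H)
    (hmarked : MarkedSubst H hne)
    (u : ℕ → A) (hu : IsFixedPointSubst H u) :
    ∃ l : ℕ, 0 < l ∧ RecogBound H u l := by
  have hnp := haper u hu
  have hf := fixP_of_fixed H hne u hu
  rcases subsingleton_or_nontrivial A with hsub | hnt
  · exact (hnp ⟨1, one_pos, fun n => Subsingleton.elim _ _⟩).elim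
  obtain ⟨M, hMp, hM⟩ := exists_len_bound H
  have hhead := head?_inj H hne hmarked
  have hlast := getLast?_inj H hne hmarked
  obtain ⟨K, hK⟩ := config_periodic H hne hhead M hM
  have hnper : ∀ p, ∃ n, 0 < p → u (n + p) ≠ u n := by
    intro p
    by_contra hc
    push Not at hc
    exact hnp ⟨p, (hc 0).1, fun n => (hc n).2⟩
  choose ν hν using hnper
  set N := ((Finset.range (K + 1)).sup fun p => ν p + p) + 1 with hN
  have hNb : ∀ p ≤ K, ν p + p < N := by
    intro p hp
    have := Finset.le_sup (f := fun p => ν p + p) (Finset.mem_range.2 (show p < K + 1 by omega))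
    omega
  obtain ⟨R, hR⟩ := recurrence H hne hprim u hf N
  have noconf : ∀ q n w, K + R + 2 * M < n → ¬ Config H M (factorAt u q n) w := by
    intro q n w hn hconf
    obtain ⟨c, p, hc, hp, hpK, hper⟩ := hK _ _ hconf (by rw [factorAt_length]; omega)
    rw [factorAt_length] at hper
    obtain ⟨j, hj1, hj2, hj3⟩ := hR (q + c)
    obtain ⟨d, rfl⟩ := Nat.exists_eq_add_of_le hj1
    have hb := hNb p hpK
    have := hper (d + ν p) (by omega)
    rw [factorAt_getElem? _ _ _ _ (by omega), factorAt_getElem? _ _ _ _ (by omega)] at this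
    have h1 := hj3 (ν p + p) hb
    have h2 := hj3 (ν p) (by omega)
    apply hν p hp
    rw [← h1, ← h2]
    have h3 := Option.some.inj this
    rw [show q + c + d + (ν p + p) = q + (c + (d + ν p) + p) by omega, h3]
    congr 1
    omega
  refine ⟨K + R + 3 * M + 1, by omega, ?_⟩
  intro z hz hlen
  obtain ⟨i, hi⟩ := hz
  have noconf' : ∀ m w, m ≤ M → ¬ Config H M (z.drop m) w := by
    intro m w hm hconf
    have hd : z.drop m = factorAt u (i + m) (z.length - m) := by
      obtain ⟨d, hd⟩ := Nat.exists_eq_add_of_le (show m ≤ z.length by omega)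
      rw [hd, Nat.add_sub_cancel_left]
      rw [hi, hd, factorAt_append, List.drop_left' (factorAt_length _ _ _)]
    rw [hd] at hconf
    exact noconf _ _ _ (by omega) hconf
  obtain ⟨R', hR'⟩ := recurrence H hne hprim u hf (i + z.length)
  obtain ⟨j, hj1, _, hj3⟩ := hR' 1
  have hz2 : z = factorAt u (j + i) z.length := by
    conv_lhs => rw [hi]
    unfold factorAt
    apply List.map_congr_left
    intro t ht
    rw [List.mem_range] at ht
    rw [← hj3 (i + t) (by omega), Nat.add_assoc]
  obtain ⟨S, x, P, s, p, h1, h2, h3, h4, h5, h6, h7⟩ :=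
    exists_decomp H hne u hf M hM (j + i) z.length (by omega) (by omega)
  rw [← hz2] at h1
  refine ⟨(S, x, P), ⟨s, p, h1, h2, h3, h4, h5, h6, h7⟩, ?_⟩
  rintro ⟨S', x', P'⟩ ⟨s', p', g1, g2, g3, g4, g5, g6, g7⟩
  simp only at g1 g2 g3 g4 g5 g6 g7
  have hMs := hM s
  have hMs' := hM s'
  rcases lt_trichotomy S.length S'.length with hlt | heq | hgt
  · obtain ⟨w, hw⟩ := config_of_decomp H hne hlast M hM z S x P S' x' P' s p s' p' h1 g1 h3 h4 g3 g4
      h6 g6 hlt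
    exact (noconf' _ w (by omega) hw).elim
  · have hh : S ++ (wordMap H x ++ P) = S' ++ (wordMap H x' ++ P') := by
      rw [← List.append_assoc, ← List.append_assoc, ← h1, g1]
    obtain ⟨e1, e2⟩ := List.append_inj hh heq
    obtain ⟨e3, e4⟩ := right_det H hne hhead x x' P P' p p' e2 h5 h6 g5 g6
    rw [e1, e3, e4]
  · obtain ⟨w, hw⟩ := config_of_decomp H hne hlast M hM z S' x' P' S x P s' p' s p g1 h1 g3 g4 h3 h4
      g6 h6 hgt
    exact (noconf' _ w (by omega) hw).elim
end

section
/- Let A be a finite alphabet and let X ⊆ A^ℕ be a nonempty closed σ-invariant set on which the shift σ admits a unique σ-invariant Borel probability measure μ. Let f : [0,1] → ℝ be continuous and let g : X → ℝ be continuous. Then (1/n) Σ_{k=0}^{n} f(k/n) g(σ^k(x)) converges, as n → ∞, to (∫_0^1 f(t) dt)·(∫_X g dμ), uniformly in x ∈ X. -/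
open Filter Topology MeasureTheory

variable {A : Type*}

lemma wb_osc (f : ℝ → ℝ) (hf : ContinuousOn f (Set.Icc 0 1)) (ε : ℝ) (hε : 0 < ε) :
    ∃ N : ℕ, ∀ n ≥ N, 0 < n ∧ ∀ k < n, ∀ t ∈ Set.Icc ((k : ℝ) / n) (((k + 1 : ℕ) : ℝ) / n),
      t ∈ Set.Icc (0 : ℝ) 1 ∧ |f t - f ((k : ℝ) / n)| ≤ ε := by
  have hu := isCompact_Icc.uniformContinuousOn_of_continuous hf
  rw [Metric.uniformContinuousOn_iff] at hu
  obtain ⟨δ, hδ, h⟩ := hu ε hε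
  obtain ⟨N, hN⟩ := exists_nat_one_div_lt hδ
  refine ⟨N + 1, fun n hn => ?_⟩
  have hn0 : 0 < n := by omega
  have hnR : (0 : ℝ) < n := by exact_mod_cast hn0
  refine ⟨hn0, fun k hk t ht => ?_⟩
  have hk1 : ((k + 1 : ℕ) : ℝ) / n ≤ 1 := by
    rw [div_le_one hnR]; exact_mod_cast hk
  have hk0 : (0 : ℝ) ≤ (k : ℝ) / n := by positivity
  have hlen : ((k + 1 : ℕ) : ℝ) / n - (k : ℝ) / n = 1 / n := by
    push_cast; ring
  have hlt : 1 / (n : ℝ) < δ := by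
    refine lt_of_le_of_lt ?_ hN
    apply one_div_le_one_div_of_le (by positivity)
    exact_mod_cast hn
  have htm : t ∈ Set.Icc (0 : ℝ) 1 := ⟨hk0.trans ht.1, ht.2.trans hk1⟩
  refine ⟨htm, ?_⟩
  have := h t htm ((k : ℝ) / n) ⟨hk0, ht.1.trans htm.2⟩ (by
    rw [Real.dist_eq, abs_of_nonneg (by linarith [ht.1])]
    linarith [ht.2])
  rw [Real.dist_eq] at this
  exact this.le

lemma wb_mem {n k : ℕ} (hk : k ≤ n) : (k : ℝ) / n ∈ Set.Icc (0 : ℝ) 1 := by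
  refine ⟨by positivity, div_le_one_of_le₀ (by exact_mod_cast hk) (by positivity)⟩

lemma wb_var (f : ℝ → ℝ) (hf : ContinuousOn f (Set.Icc 0 1)) :
    Tendsto (fun n : ℕ => (1 / (n : ℝ)) * ∑ k ∈ Finset.range n,
      |f (((k + 1 : ℕ) : ℝ) / n) - f ((k : ℝ) / n)|) atTop (𝓝 0) := by
  rw [Metric.tendsto_atTop]
  intro ε hε
  obtain ⟨N, hN⟩ := wb_osc f hf (ε / 2) (by positivity)
  refine ⟨N, fun n hn => ?_⟩
  obtain ⟨hn0, h⟩ := hN n hn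
  have hnR : (0 : ℝ) < n := by exact_mod_cast hn0
  have hs : ∑ k ∈ Finset.range n, |f (((k + 1 : ℕ) : ℝ) / n) - f ((k : ℝ) / n)| ≤ n * (ε / 2) := by
    have := Finset.sum_le_card_nsmul (Finset.range n)
      (fun k : ℕ => |f (((k + 1 : ℕ) : ℝ) / n) - f ((k : ℝ) / n)|) (ε / 2) (fun k hk =>
      (h k (Finset.mem_range.1 hk) _ ⟨by gcongr; simp, le_rfl⟩).2)
    simpa using this
  rw [Real.dist_eq, sub_zero, abs_of_nonneg (by positivity)]
  calc _ ≤ (1 / (n : ℝ)) * (n * (ε / 2)) := by gcongr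
    _ = ε / 2 := by field_simp
    _ < ε := by linarith

lemma wb_riemann (f : ℝ → ℝ) (hf : ContinuousOn f (Set.Icc 0 1)) :
    Tendsto (fun n : ℕ => (1 / (n : ℝ)) * ∑ k ∈ Finset.range (n + 1), f ((k : ℝ) / n))
      atTop (𝓝 (∫ t in (0 : ℝ)..1, f t)) := by
  have h1 : Tendsto (fun n : ℕ => (1 / (n : ℝ)) * ∑ k ∈ Finset.range n, f ((k : ℝ) / n))
      atTop (𝓝 (∫ t in (0 : ℝ)..1, f t)) := by
    rw [Metric.tendsto_atTop]
    intro ε hε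
    obtain ⟨N, hN⟩ := wb_osc f hf (ε / 2) (by positivity)
    refine ⟨N, fun n hn => ?_⟩
    obtain ⟨hn0, h⟩ := hN n hn
    have hnR : (0 : ℝ) < n := by exact_mod_cast hn0
    have hle : ∀ k : ℕ, (k : ℝ) / n ≤ ((k + 1 : ℕ) : ℝ) / n := fun k => by gcongr; simp
    have hint : ∀ k < n, IntervalIntegrable f volume ((k : ℝ) / n) (((k + 1 : ℕ) : ℝ) / n) := by
      intro k hk
      apply ContinuousOn.intervalIntegrable
      rw [Set.uIcc_of_le (hle k)]
      exact hf.mono fun t ht => (h k hk t ht).1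
    have hsum := intervalIntegral.sum_integral_adjacent_intervals
      (a := fun k : ℕ => (k : ℝ) / n) (n := n) hint
    have e : ∫ t in (0 : ℝ)..1, f t =
        ∑ k ∈ Finset.range n, ∫ t in ((k : ℝ) / n)..(((k + 1 : ℕ) : ℝ) / n), f t := by
      rw [hsum]; simp [hnR.ne']
    have key : ∀ k ∈ Finset.range n, |(1 / (n : ℝ)) * f ((k : ℝ) / n) -
        ∫ t in ((k : ℝ) / n)..(((k + 1 : ℕ) : ℝ) / n), f t| ≤ ε / 2 * (1 / n) := by
      intro k hk
      have hk := Finset.mem_range.1 hk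
      have hl : ((k + 1 : ℕ) : ℝ) / n - (k : ℝ) / n = 1 / n := by push_cast; ring
      have hc : (1 / (n : ℝ)) * f ((k : ℝ) / n) =
          ∫ t in ((k : ℝ) / n)..(((k + 1 : ℕ) : ℝ) / n), f ((k : ℝ) / n) := by
        rw [intervalIntegral.integral_const, hl]; simp
      rw [hc, abs_sub_comm, ← intervalIntegral.integral_sub (hint k hk) (by simp)]
      have := intervalIntegral.norm_integral_le_of_norm_le_const
        (f := fun t => f t - f ((k : ℝ) / n)) (a := (k : ℝ) / n) (b := ((k + 1 : ℕ) : ℝ) / n)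
        (C := ε / 2) (fun t ht => by
          rw [Set.uIoc_of_le (hle k)] at ht
          exact (h k hk t ⟨ht.1.le, ht.2⟩).2)
      rw [hl, abs_of_nonneg (by positivity : (0 : ℝ) ≤ 1 / n)] at this
      exact this
    rw [Real.dist_eq, e, Finset.mul_sum, ← Finset.sum_sub_distrib]
    calc _ ≤ ∑ k ∈ Finset.range n, ε / 2 * (1 / (n : ℝ)) :=
          (Finset.abs_sum_le_sum_abs _ _).trans (Finset.sum_le_sum key)
      _ = ε / 2 := by simp; field_simp
      _ < ε := by linarith
  have h2 : Tendsto (fun n : ℕ => (1 / (n : ℝ)) * f 1) atTop (𝓝 (0 * f 1)) :=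
    tendsto_one_div_atTop_nhds_zero_nat.mul_const _
  rw [zero_mul] at h2
  have h3 := h1.add h2
  rw [add_zero] at h3
  refine h3.congr' ?_
  filter_upwards [eventually_gt_atTop 0] with n hn
  have hnR : (n : ℝ) ≠ 0 := by positivity
  rw [Finset.sum_range_succ, mul_add, div_self hnR]

/-- Weighted Krylov–Bogoliubov argument. -/
lemma wb_kb {Y : Type*} [TopologicalSpace Y] [CompactSpace Y] [T2Space Y] [MeasurableSpace Y]
    [BorelSpace Y] [HasOuterApproxClosed Y] (T : Y → Y) (hT : Continuous T) (g : C(Y, ℝ)) (c : ℝ)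
    (huniq : ∀ ν : Measure Y, IsProbabilityMeasure ν → Measure.map T ν = ν → ∫ y, g y ∂ν = c)
    (w : ℕ → ℕ → ℝ) (hw0 : ∀ n, ∀ k ≤ n, 0 ≤ w n k)
    (hw1 : ∀ n, ∑ k ∈ Finset.range (n + 1), w n k = 1)
    (hvar : Tendsto (fun n => (∑ k ∈ Finset.range n, |w n (k + 1) - w n k|) + w n n + w n 0)
      atTop (𝓝 0)) (x : ℕ → Y) :
    Tendsto (fun n => ∑ k ∈ Finset.range (n + 1), w n k * g (T^[k] (x n))) atTop (𝓝 c) := by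
  let ν : ℕ → Measure Y := fun n =>
    ∑ k ∈ Finset.range (n + 1), ENNReal.ofReal (w n k) • Measure.dirac (T^[k] (x n))
  have hν : ∀ n, IsProbabilityMeasure (ν n) := by
    intro n
    constructor
    simp only [ν, Measure.coe_finsetSum, Finset.sum_apply, Measure.smul_apply, measure_univ,
      smul_eq_mul, mul_one]
    rw [← ENNReal.ofReal_sum_of_nonneg (fun k hk => hw0 n k (by
      have := Finset.mem_range.1 hk; omega)), hw1, ENNReal.ofReal_one]
  have hI : ∀ n (h : C(Y, ℝ)), ∫ y, h y ∂(ν n) =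
      ∑ k ∈ Finset.range (n + 1), w n k * h (T^[k] (x n)) := by
    intro n h
    have hsm : StronglyMeasurable h :=
      (BoundedContinuousFunction.mkOfCompact h).continuous.measurable.stronglyMeasurable
    simp only [ν]
    rw [integral_finsetSum_measure]
    · refine Finset.sum_congr rfl fun k hk => ?_
      rw [integral_smul_measure, integral_dirac' _ _ hsm, ENNReal.toReal_ofReal (hw0 n k (by
        have := Finset.mem_range.1 hk; omega)), smul_eq_mul]
    · intro k hk
      refine Integrable.smul_measure ?_ ENNReal.ofReal_ne_top
      exact (BoundedContinuousFunction.mkOfCompact h).integrable _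
  have hdef : ∀ h : C(Y, ℝ), Tendsto (fun n => ∫ y, h (T y) ∂(ν n) - ∫ y, h y ∂(ν n))
      atTop (𝓝 0) := by
    intro h
    have hb : Tendsto (fun n => ((∑ k ∈ Finset.range n, |w n (k + 1) - w n k|)
      + w n n + w n 0) * ‖h‖) atTop (𝓝 0) := by
      simpa using hvar.mul_const ‖h‖
    refine squeeze_zero_norm (fun n => ?_) hb
    have e1 := hI n (h.comp ⟨T, hT⟩)
    simp only [ContinuousMap.comp_apply, ContinuousMap.coe_mk, ← Function.iterate_succ_apply'] at e1
    rw [e1, hI n h, Finset.sum_range_succ, Finset.sum_range_succ' (fun k => w n k * h (T^[k] (x n)))]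
    have e2 : ∀ a b p q : ℝ, a + p - (b + q) = (a - b) + p - q := by intros; ring
    rw [e2, ← Finset.sum_sub_distrib]
    have hh : ∀ y, |h y| ≤ ‖h‖ := fun y => h.norm_coe_le_norm y
    refine (norm_sub_le _ _).trans ?_
    rw [add_mul, add_mul]
    refine add_le_add ((norm_add_le _ _).trans (add_le_add ?_ ?_)) ?_
    · refine (norm_sum_le _ _).trans ?_
      rw [Finset.sum_mul]
      refine Finset.sum_le_sum fun k hk => ?_
      rw [← sub_mul, norm_mul, Real.norm_eq_abs, abs_sub_comm]
      exact mul_le_mul_of_nonneg_left (hh _) (abs_nonneg _)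
    · rw [norm_mul, Real.norm_eq_abs, abs_of_nonneg (hw0 n n le_rfl)]
      exact mul_le_mul_of_nonneg_left (hh _) (hw0 n n le_rfl)
    · rw [norm_mul, Real.norm_eq_abs, abs_of_nonneg (hw0 n 0 (Nat.zero_le _))]
      exact mul_le_mul_of_nonneg_left (hh _) (hw0 n 0 (Nat.zero_le _))
  simp only [← hI]
  rw [tendsto_iff_ultrafilter]
  intro U hU
  let P : ℕ → ProbabilityMeasure Y := fun n => ⟨ν n, hν n⟩
  have hlim : Tendsto P U (𝓝 (Ultrafilter.lim (U.map P))) := Ultrafilter.le_nhds_lim (U.map P)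
  generalize Ultrafilter.lim (U.map P) = ν0 at hlim
  rw [ProbabilityMeasure.tendsto_iff_forall_integral_tendsto] at hlim
  have hlim' : ∀ h : C(Y, ℝ), Tendsto (fun n => ∫ y, h y ∂(ν n)) U
      (𝓝 (∫ y, h y ∂(ν0 : Measure Y))) := fun h => hlim (BoundedContinuousFunction.mkOfCompact h)
  rw [← huniq ν0 inferInstance ?_]
  · exact hlim' g
  · have : IsProbabilityMeasure (Measure.map T (ν0 : Measure Y)) :=
      Measure.isProbabilityMeasure_map hT.measurable.aemeasurable
    apply ext_of_forall_integral_eq_of_IsFiniteMeasure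
    intro h
    rw [integral_map hT.measurable.aemeasurable h.continuous.measurable.aestronglyMeasurable]
    have a := hlim' (h.toContinuousMap.comp ⟨T, hT⟩)
    have b := hlim' h.toContinuousMap
    have d := (hdef h.toContinuousMap).mono_left hU
    exact sub_eq_zero.1 (tendsto_nhds_unique (a.sub b) d)

/-- The case of a weight bounded below by one. -/
lemma wb_pos {Y : Type*} [TopologicalSpace Y] [CompactSpace Y] [T2Space Y] [MeasurableSpace Y]
    [BorelSpace Y] [HasOuterApproxClosed Y] (T : Y → Y) (hT : Continuous T) (g : C(Y, ℝ)) (c : ℝ)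
    (huniq : ∀ ν : Measure Y, IsProbabilityMeasure ν → Measure.map T ν = ν → ∫ y, g y ∂ν = c)
    (f : ℝ → ℝ) (hf : ContinuousOn f (Set.Icc 0 1)) (hf1 : ∀ t ∈ Set.Icc (0 : ℝ) 1, 1 ≤ f t)
    (x : ℕ → Y) :
    Tendsto (fun n : ℕ => (1 / (n : ℝ)) *
      ∑ k ∈ Finset.range (n + 1), f ((k : ℝ) / n) * g (T^[k] (x n))) atTop
      (𝓝 ((∫ t in (0 : ℝ)..1, f t) * c)) := by
  let S : ℕ → ℝ := fun n => ∑ k ∈ Finset.range (n + 1), f ((k : ℝ) / n)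
  have hS : ∀ n : ℕ, (n : ℝ) + 1 ≤ S n := by
    intro n
    have := Finset.card_nsmul_le_sum (Finset.range (n + 1)) (fun k : ℕ => f ((k : ℝ) / n)) 1
      (fun k hk => hf1 _ (wb_mem (by have := Finset.mem_range.1 hk; omega)))
    simpa using this
  have hSpos : ∀ n, 0 < S n := fun n => lt_of_lt_of_le (by positivity) (hS n)
  have hfpos : ∀ n k : ℕ, k ≤ n → 0 ≤ f ((k : ℝ) / (n : ℝ)) := fun n k hk =>
    zero_le_one.trans (hf1 _ (wb_mem hk))
  have hkb := wb_kb T hT g c huniq (fun n k => f ((k : ℝ) / n) / S n)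
    (fun n k hk => div_nonneg (hfpos n k hk) (hSpos n).le)
    (fun n => by rw [← Finset.sum_div]; exact div_self (hSpos n).ne') ?_ x
  · refine ((wb_riemann f hf).mul hkb).congr fun n => ?_
    change _ * S n * _ = _
    rw [mul_assoc, Finset.mul_sum]
    congr 1
    refine Finset.sum_congr rfl fun k _ => ?_
    have := (hSpos n).ne'
    field_simp
  · have hb : Tendsto (fun n : ℕ => (1 / (n : ℝ)) * (∑ k ∈ Finset.range n,
      |f (((k + 1 : ℕ) : ℝ) / n) - f ((k : ℝ) / n)|) + (1 / (n : ℝ)) * f 1 + (1 / (n : ℝ)) * f 0)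
        atTop (𝓝 (0 + 0 * f 1 + 0 * f 0)) :=
      ((wb_var f hf).add (tendsto_one_div_atTop_nhds_zero_nat.mul_const _)).add
        (tendsto_one_div_atTop_nhds_zero_nat.mul_const _)
    simp only [zero_mul, add_zero] at hb
    refine squeeze_zero' (Eventually.of_forall fun n => ?_) ?_ hb
    · have := div_nonneg (hfpos n n le_rfl) (hSpos n).le
      have := div_nonneg (hfpos n 0 (Nat.zero_le _)) (hSpos n).le
      positivity
    · filter_upwards [eventually_gt_atTop 0] with n hn
      have hnR : (0 : ℝ) < n := by exact_mod_cast hn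
      have hinv : 1 / S n ≤ 1 / n := one_div_le_one_div_of_le hnR (by linarith [hS n])
      have e : (∑ k ∈ Finset.range n, |f (((k + 1 : ℕ) : ℝ) / n) / S n - f ((k : ℝ) / n) / S n|)
          = (1 / S n) * ∑ k ∈ Finset.range n, |f (((k + 1 : ℕ) : ℝ) / n) - f ((k : ℝ) / n)| := by
        rw [Finset.mul_sum]
        refine Finset.sum_congr rfl fun k _ => ?_
        rw [← sub_div, abs_div, abs_of_pos (hSpos n)]; ring
      have h1 := hfpos n n le_rfl
      have h0 := hfpos n 0 (Nat.zero_le _)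
      rw [e]
      rw [div_self hnR.ne'] at h1 ⊢
      rw [Nat.cast_zero, zero_div] at h0 ⊢
      rw [← one_div_mul_eq_div (S n) (f 1), ← one_div_mul_eq_div (S n) (f 0)]
      gcongr

lemma wb_gen {Y : Type*} [TopologicalSpace Y] [CompactSpace Y] [T2Space Y] [MeasurableSpace Y]
    [BorelSpace Y] [HasOuterApproxClosed Y] (T : Y → Y) (hT : Continuous T) (g : C(Y, ℝ)) (c : ℝ)
    (huniq : ∀ ν : Measure Y, IsProbabilityMeasure ν → Measure.map T ν = ν → ∫ y, g y ∂ν = c)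
    (f : ℝ → ℝ) (hf : ContinuousOn f (Set.Icc 0 1)) (x : ℕ → Y) :
    Tendsto (fun n : ℕ => (1 / (n : ℝ)) *
      ∑ k ∈ Finset.range (n + 1), f ((k : ℝ) / n) * g (T^[k] (x n))) atTop
      (𝓝 ((∫ t in (0 : ℝ)..1, f t) * c)) := by
  obtain ⟨C, hC⟩ := isCompact_Icc.exists_bound_of_continuousOn hf
  have hC0 : 0 ≤ C := (norm_nonneg _).trans (hC 0 ⟨le_rfl, zero_le_one⟩)
  have h1 := wb_pos T hT g c huniq (fun t => f t + (C + 1)) (hf.add continuousOn_const)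
    (fun t ht => by
      have := abs_le.1 (hC t ht)
      linarith [this.1]) x
  have h2 := wb_pos T hT g c huniq (fun _ => C + 1) continuousOn_const
    (fun t ht => by linarith) x
  have hfi : IntervalIntegrable f volume 0 1 :=
    ContinuousOn.intervalIntegrable (by rwa [Set.uIcc_of_le zero_le_one])
  rw [intervalIntegral.integral_add hfi (by simp)] at h1
  have h3 := h1.sub h2
  rw [← sub_mul, add_sub_cancel_right] at h3
  refine h3.congr fun n => ?_
  rw [← mul_sub, ← Finset.sum_sub_distrib]
  congr 1
  refine Finset.sum_congr rfl fun k _ => ?_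
  ring

/-- (Technical lemma.) For a uniquely ergodic subshift `X` with
invariant measure `μ`, and continuous `f : [0,1] → ℝ`, `g : X → ℝ`, the weighted
Birkhoff averages `(1/n) ∑_{k=0}^n f(k/n) g(σ^k x)` converge to
`(∫_0^1 f)·(∫ g dμ)` uniformly in `x ∈ X`. -/
theorem weighted_birkhoff_uniquely_ergodic
    {A : Type*} [Fintype A] [TopologicalSpace A] [DiscreteTopology A]
    [MeasurableSpace A] [BorelSpace A]
    (X : Set (ℕ → A)) (hXne : X.Nonempty) (hXclosed : IsClosed X)
    (hXinv : ∀ x ∈ X, shift x ∈ X)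
    (μ : Measure (ℕ → A)) [IsProbabilityMeasure μ]
    (hinv : Measure.map shift μ = μ) (hsupp : μ Xᶜ = 0)
    (huniq : ∀ ν : Measure (ℕ → A), IsProbabilityMeasure ν →
      Measure.map shift ν = ν → ν Xᶜ = 0 → ν = μ)
    (f : ℝ → ℝ) (hf : ContinuousOn f (Set.Icc 0 1))
    (g : (ℕ → A) → ℝ) (hg : ContinuousOn g X) :
    TendstoUniformlyOn
      (fun (n : ℕ) (x : ℕ → A) =>
        (1 / (n : ℝ)) * ∑ k ∈ Finset.range (n + 1), f ((k : ℝ) / (n : ℝ)) * g (shift^[k] x))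
      (fun _ => (∫ t in (0:ℝ)..1, f t) * ∫ y, g y ∂μ)
      atTop X := by
  have hshift : Continuous (shift : (ℕ → A) → (ℕ → A)) :=
    continuous_pi fun n => continuous_apply (n + 1)
  have : CompactSpace X := isCompact_iff_compactSpace.1 hXclosed.isCompact
  let T : X → X := fun x => ⟨shift x, hXinv x x.2⟩
  have hT : Continuous T := (hshift.comp continuous_subtype_val).subtype_mk _
  let G : C(X, ℝ) := ⟨X.domRestrict g, hg.domRestrict⟩
  have hemb : MeasurableEmbedding (Subtype.val : X → (ℕ → A)) :=
    MeasurableEmbedding.subtype_coe hXclosed.measurableSet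
  letI : TopologicalSpace.PseudoMetrizableSpace X := inferInstance
  letI : PseudoMetricSpace X := TopologicalSpace.pseudoMetrizableSpacePseudoMetric X
  have hu : ∀ ν : Measure X, IsProbabilityMeasure ν → Measure.map T ν = ν →
      ∫ y, G y ∂ν = ∫ y, g y ∂μ := by
    intro ν _ hν
    have h1 : Measure.map Subtype.val ν = μ := by
      apply huniq
      · exact Measure.isProbabilityMeasure_map measurable_subtype_coe.aemeasurable
      · rw [Measure.map_map hshift.measurable measurable_subtype_coe]
        conv_rhs => rw [← hν]
        rw [Measure.map_map measurable_subtype_coe hT.measurable]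
        rfl
      · rw [Measure.map_apply measurable_subtype_coe hXclosed.measurableSet.compl]
        simp
    rw [← h1, hemb.integral_map]
    rfl
  have hTk : ∀ (k : ℕ) (x : X), ((T^[k] x : X) : ℕ → A) = shift^[k] x := by
    intro k
    induction k with
    | zero => intro x; rfl
    | succ k ih => intro x; rw [Function.iterate_succ_apply, Function.iterate_succ_apply, ih]
  rw [Metric.tendstoUniformlyOn_iff]
  intro ε hε
  have : Nonempty X := hXne.to_subtype
  let bad : ℕ → X → Prop := fun n x => ε ≤ dist ((∫ t in (0:ℝ)..1, f t) * ∫ y, g y ∂μ)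
    ((1 / (n : ℝ)) * ∑ k ∈ Finset.range (n + 1), f ((k : ℝ) / (n : ℝ)) * g (shift^[k] x))
  have hsel : ∀ n, ∃ x : X, (∃ y, bad n y) → bad n x := by
    intro n
    by_cases h : ∃ y, bad n y
    · exact ⟨h.choose, fun _ => h.choose_spec⟩
    · exact ⟨Classical.arbitrary X, fun h' => absurd h' h⟩
  choose x hx using hsel
  have hlim := wb_gen T hT G _ hu f hf x
  have hev := hlim.eventually (Metric.ball_mem_nhds _ hε)
  filter_upwards [hev] with n hn y hy
  by_contra hcon
  have hb := hx n ⟨⟨y, hy⟩, not_lt.1 hcon⟩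
  have hn' : dist _ _ < ε := hn
  rw [dist_comm] at hn'
  have hG : ∀ k, G (T^[k] (x n)) = g (shift^[k] (x n)) := fun k => by
    change g _ = _
    rw [hTk]
  simp only [hG] at hn'
  exact absurd hn' (not_lt.2 hb)
end
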